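/- arXiv:1609.01953 — 5 statements merged into one kernel-verified Lean document; each statement's English description precedes it below -/
import Mathlib

section
/- Let d ≥ 1 and let ψ : ℝ^{d+1} → ℝ be given by ψ(x) = −x_{d+1} + x_{d+1}²/2 − |x'|²/4. Then for every r ∈ (0, 2−√2), every x ∈ ℝ^{d+1} with |x| < r, and every ξ ∈ ℝ^{d+1} with |ξ|² = |∇ψ(x)|², one has Σ_{j,k=1}^{d+1} (∂_j∂_k ψ)(x)·(ξ_j ξ_k + ∂_jψ(x)·∂_kψ(x)) > 0. (Explicitly, this sum equals (3/2)·ξ_{d+1}² − |x'|²/4 + (x_{d+1}−1)²/2.) -/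
noncomputable section
open Real Set

/-- The Carleman weight `ψ(x) = -x_{d+1} + x_{d+1}²/2 - |x'|²/4` on `ℝ^{d+1}`. -/
def psiW (d : ℕ) (x : EuclideanSpace ℝ (Fin (d+1))) : ℝ :=
  -(x (Fin.last d)) + (x (Fin.last d))^2 / 2
    - (∑ i : Fin d, (x (Fin.castSucc i))^2) / 4

/-- The `j`-th partial derivative of `ψ`. -/
def pgrad (d : ℕ) (x : EuclideanSpace ℝ (Fin (d+1))) (j : Fin (d+1)) : ℝ :=
  fderiv ℝ (psiW d) x (EuclideanSpace.single j (1:ℝ))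

/-- The `(j,k)` entry of the Hessian of `ψ`. -/
def phess (d : ℕ) (x : EuclideanSpace ℝ (Fin (d+1))) (j k : Fin (d+1)) : ℝ :=
  fderiv ℝ (fun y => fderiv ℝ (psiW d) y (EuclideanSpace.single k (1:ℝ))) x
    (EuclideanSpace.single j (1:ℝ))

lemma aux_pgrad (d : ℕ) (x : EuclideanSpace ℝ (Fin (d+1))) (v : EuclideanSpace ℝ (Fin (d+1))) :
    fderiv ℝ (psiW d) x v = (x (Fin.last d) - 1) * v (Fin.last d)
      - (∑ i : Fin d, x (Fin.castSucc i) * v (Fin.castSucc i)) / 2 := by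
  have hp : ∀ i : Fin (d+1), HasFDerivAt (fun y : EuclideanSpace ℝ (Fin (d+1)) => y i)
      (EuclideanSpace.proj i : EuclideanSpace ℝ (Fin (d+1)) →L[ℝ] ℝ) x :=
    fun i => (EuclideanSpace.proj i : EuclideanSpace ℝ (Fin (d+1)) →L[ℝ] ℝ).hasFDerivAt
  have h := (((hp (Fin.last d)).neg).add (((hp (Fin.last d)).pow 2).mul_const (1/2 : ℝ))).sub
    ((HasFDerivAt.fun_sum (u := Finset.univ)
      (fun (i : Fin d) _ => (hp (Fin.castSucc i)).pow 2)).mul_const (1/4 : ℝ))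
  have e : HasFDerivAt (psiW d) _ x := h.congr_of_eventuallyEq
    (Filter.Eventually.of_forall fun y => by simp [psiW]; ring)
  rw [e.fderiv]
  simp [Finset.mul_sum, Finset.sum_div, ContinuousLinearMap.sum_apply]
  have : ∀ i : Fin d, 4⁻¹ * (2 * x.ofLp i.castSucc * v.ofLp i.castSucc)
    = x.ofLp i.castSucc * v.ofLp i.castSucc / 2 := fun i => by ring
  simp only [this]
  ring

lemma aux_grad_last (d : ℕ) (x : EuclideanSpace ℝ (Fin (d+1))) :
    fderiv ℝ (psiW d) x (EuclideanSpace.single (Fin.last d) (1:ℝ)) = x (Fin.last d) - 1 := by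
  rw [aux_pgrad]; simp [Pi.single_apply, Fin.castSucc_ne_last]

lemma aux_grad_cs (d : ℕ) (x : EuclideanSpace ℝ (Fin (d+1))) (i : Fin d) :
    fderiv ℝ (psiW d) x (EuclideanSpace.single (Fin.castSucc i) (1:ℝ))
      = -(1/2) * x (Fin.castSucc i) := by
  rw [aux_pgrad]; simp [Pi.single_apply, (Fin.castSucc_ne_last i).symm]; ring

lemma aux_fd (d : ℕ) (x v : EuclideanSpace ℝ (Fin (d+1))) (a b : ℝ) (i : Fin (d+1)) :
    fderiv ℝ (fun y : EuclideanSpace ℝ (Fin (d+1)) => a * y i - b) x v = a * v i := by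
  have h := (((EuclideanSpace.proj i : EuclideanSpace ℝ (Fin (d+1)) →L[ℝ] ℝ).hasFDerivAt
    (x := x)).const_mul a).sub_const b
  have h' : HasFDerivAt (fun y : EuclideanSpace ℝ (Fin (d+1)) => a * y i - b) _ x := h
  rw [h'.fderiv]; simp

lemma aux_hess_last (d : ℕ) (x : EuclideanSpace ℝ (Fin (d+1))) (j : Fin (d+1)) :
    phess d x j (Fin.last d) = if j = Fin.last d then 1 else 0 := by
  have := aux_fd d x (EuclideanSpace.single j (1:ℝ)) 1 1 (Fin.last d)
  simp only [one_mul] at this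
  simp only [phess, aux_grad_last, this]
  simp [Pi.single_apply, eq_comm]

lemma aux_hess_cs (d : ℕ) (x : EuclideanSpace ℝ (Fin (d+1))) (j : Fin (d+1)) (i : Fin d) :
    phess d x j (Fin.castSucc i) = if j = Fin.castSucc i then -(1/2) else 0 := by
  have := aux_fd d x (EuclideanSpace.single j (1:ℝ)) (-(1/2)) 0 (Fin.castSucc i)
  simp only [sub_zero] at this
  simp only [phess, aux_grad_cs, this]
  simp [Pi.single_apply, eq_comm]

/-- The weight `ψ` satisfies the pseudoconvexity condition of Lebeau–Robbiano for
`r < 2 - √2`: if `|ξ|² = |∇ψ(x)|²` then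
`Σ_{j,k} ∂_j∂_kψ(x) (ξ_jξ_k + ∂_jψ(x)∂_kψ(x)) > 0`, and this sum equals
`(3/2)ξ_{d+1}² − |x'|²/4 + (x_{d+1}−1)²/2`. -/
theorem psi_pseudoconvex (d : ℕ) (hd : 1 ≤ d) (r : ℝ)
    (hr : r ∈ Set.Ioo (0:ℝ) (2 - Real.sqrt 2))
    (x : EuclideanSpace ℝ (Fin (d+1))) (hx : ‖x‖ < r)
    (ξ : Fin (d+1) → ℝ)
    (hξ : ∑ j, (ξ j)^2 = ∑ j, (pgrad d x j)^2) :
    0 < ∑ j, ∑ k, phess d x j k * (ξ j * ξ k + pgrad d x j * pgrad d x k) ∧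
    ∑ j, ∑ k, phess d x j k * (ξ j * ξ k + pgrad d x j * pgrad d x k)
      = (3/2) * (ξ (Fin.last d))^2
        - (∑ i : Fin d, (x (Fin.castSucc i))^2) / 4
        + (x (Fin.last d) - 1)^2 / 2 := by
  have hs : ∑ j, ∑ k, phess d x j k * (ξ j * ξ k + pgrad d x j * pgrad d x k)
      = (3/2) * (ξ (Fin.last d))^2
        - (∑ i : Fin d, (x (Fin.castSucc i))^2) / 4
        + (x (Fin.last d) - 1)^2 / 2 := by
    rw [Finset.sum_comm, Fin.sum_univ_castSucc]
    simp only [aux_hess_last, aux_hess_cs, ite_mul, zero_mul, Finset.sum_ite_eq',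
      Finset.sum_ite_eq, Finset.mem_univ, if_true]
    rw [Fin.sum_univ_castSucc, Fin.sum_univ_castSucc] at hξ
    simp only [pgrad, aux_grad_last, aux_grad_cs] at hξ ⊢
    have e1 : ∑ i : Fin d, (-(1/2) * x (Fin.castSucc i))^2
        = (1/4) * ∑ i : Fin d, (x (Fin.castSucc i))^2 := by
      rw [Finset.mul_sum]; exact Finset.sum_congr rfl fun i _ => by ring
    have e2 : ∑ i : Fin d, -(1/2) * (ξ (Fin.castSucc i) * ξ (Fin.castSucc i)
          + -(1/2) * x (Fin.castSucc i) * (-(1/2) * x (Fin.castSucc i)))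
        = -(1/2) * ∑ i : Fin d, (ξ (Fin.castSucc i))^2
          - (1/8) * ∑ i : Fin d, (x (Fin.castSucc i))^2 := by
      rw [Finset.mul_sum, Finset.mul_sum, ← Finset.sum_sub_distrib]
      exact Finset.sum_congr rfl fun i _ => by ring
    rw [e1] at hξ
    rw [e2]
    linarith
  refine ⟨?_, hs⟩
  rw [hs]
  have hn := EuclideanSpace.real_norm_sq_eq x
  rw [Fin.sum_univ_castSucc] at hn
  have h2 : (1.4:ℝ) < Real.sqrt 2 := Real.lt_sqrt_of_sq_lt (by norm_num)
  have h3 : ‖x‖ < 0.6 := by linarith [hr.2]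
  have h4 : ‖x‖^2 < 0.36 := by nlinarith [norm_nonneg x]
  nlinarith [sq_nonneg (ξ (Fin.last d)), sq_nonneg (3 * x (Fin.last d) - 2)]
end
end

section
/- Let d ≥ 1, 0 ≤ ω₋ < ω₊ < 1, G_u ∈ ℕ, u_max ≥ 0, α₁, β₁ > 0 and α₂, β₂ ≥ 0. Let {u_t : t ∈ [0,1]} be bounded measurable functions ℝ^d → ℝ such that for all t ∈ [0,1]: supp u_t ⊂ Λ_{G_u} and ‖u_t‖_∞ ≤ u_max; and for all t ∈ [ω₋, ω₊] and all δ ∈ (0, 1 − ω₊] there exists x₀ ∈ Λ_{G_u} with u_{t+δ}(x) − u_t(x) ≥ α₁·δ^{α₂}·χ_{B(x₀, β₁δ^{β₂})}(x) for all x ∈ ℝ^d. Let 0 < G₁ < G₂ and let D ⊂ ℝ^d be a (G₁,G₂)-Delone set. For ω ∈ [ω₋, ω₊]^D set V_ω(x) = Σ_{j∈D} u_{ω_j}(x − j), and let V_{ω+δ} be obtained by replacing every ω_j by ω_j + δ. Then for every ω ∈ [ω₋, ω₊]^D, every δ ∈ (0, 1 − ω₊] with β₁δ^{β₂} < (G₂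 + G_u)/2, and every L ∈ (G₂ + G_u)ℕ, there exists a (G₂ + G_u, β₁δ^{β₂})-equidistributed sequence (z_k) such that for all x ∈ Λ_L: V_{ω+δ}(x) − V_ω(x) ≥ α₁·δ^{α₂}·χ_{W_{β₁δ^{β₂}}(L)}(x), where W_{β₁δ^{β₂}}(L) is the set associated to that sequence. -/
noncomputable section
open MeasureTheory Real Set

/-- The open cube `(-L/2, L/2)^d` in `ℝ^d`. -/
def cube (d : ℕ) (L : ℝ) : Set (EuclideanSpace ℝ (Fin d)) :=
  {x | ∀ i, x i ∈ Set.Ioo (-(L/2)) (L/2)}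

/-- A `(G,δ)`-equidistributed sequence. -/
def Equidistributed (d : ℕ) (G δ : ℝ)
    (z : (Fin d → ℤ) → EuclideanSpace ℝ (Fin d)) : Prop :=
  ∀ j : Fin d → ℤ, Metric.ball (z j) δ ⊆
    {x | ∀ i, x i - G * (j i : ℝ) ∈ Set.Ioo (-(G/2)) (G/2)}

/-- The set `W_δ(L)`. -/
def Wset (d : ℕ) (δ L : ℝ) (z : (Fin d → ℤ) → EuclideanSpace ℝ (Fin d)) :
    Set (EuclideanSpace ℝ (Fin d)) :=
  (⋃ j, Metric.ball (z j) δ) ∩ cube d L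

lemma delone_finite (d : ℕ) (G₁ R : ℝ) (hG₁ : 0 < G₁)
    (D : Set (EuclideanSpace ℝ (Fin d)))
    (hDel1 : ∀ x : EuclideanSpace ℝ (Fin d),
      (D ∩ {y | ∀ i, y i - x i ∈ Set.Ioo (-(G₁/2)) (G₁/2)}).Subsingleton)
    (x : EuclideanSpace ℝ (Fin d)) :
    {j : D | x - (j : EuclideanSpace ℝ (Fin d)) ∈ cube d R}.Finite := by
  let F : D → (Fin d → ℤ) := fun j i => ⌊(x i - (j : EuclideanSpace ℝ (Fin d)) i) / (G₁/2)⌋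
  have hG : 0 < G₁/2 := by positivity
  have hinj : Function.Injective F := by
    intro a b hab
    apply Subtype.ext
    refine hDel1 (a : EuclideanSpace ℝ (Fin d)) ⟨a.2, fun i => ?_⟩ ⟨b.2, fun i => ?_⟩
    · simp only [sub_self, Set.mem_Ioo]; constructor <;> linarith
    · have h := Int.abs_sub_lt_one_of_floor_eq_floor (congrFun hab i)
      rw [← sub_div, abs_div, abs_of_pos hG, div_lt_one hG, abs_lt] at h
      constructor <;> linarith [h.1, h.2]
  refine Set.Finite.of_finite_image (f := F) ?_ hinj.injOn
  refine (Set.finite_Icc (fun _ : Fin d => ⌊(-(R/2)) / (G₁/2)⌋)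
    (fun _ : Fin d => ⌊(R/2) / (G₁/2)⌋)).subset ?_
  rintro _ ⟨j, hj, rfl⟩
  refine ⟨fun i => ?_, fun i => ?_⟩
  · refine Int.floor_le_floor ((div_le_div_iff_of_pos_right hG).2 ?_)
    exact (hj i).1.le
  · refine Int.floor_le_floor ((div_le_div_iff_of_pos_right hG).2 ?_)
    exact (hj i).2.le

/-- **Lemma 4.1 (i)**: for a `(G₁,G₂)`-Delone set `D` and a monotone family of
single-site potentials `u_t` satisfying the abstract condition (2.2), the
difference `V_{ω+δ} - V_ω` of the random potentials dominates
`α₁ δ^{α₂} χ_{W_{β₁δ^{β₂}}(L)}` on `Λ_L`, for a suitable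
`(G₂+G_u, β₁δ^{β₂})`-equidistributed sequence. -/
theorem potential_difference_lower_bound
    (d : ℕ) (hd : 1 ≤ d)
    (ωm ωp : ℝ) (h1 : 0 ≤ ωm) (h2 : ωm < ωp) (h3 : ωp < 1)
    (Gu : ℕ) (hGu : 0 < Gu) (umax : ℝ) (humax : 0 ≤ umax)
    (α₁ β₁ : ℝ) (hα₁ : 0 < α₁) (hβ₁ : 0 < β₁)
    (α₂ β₂ : ℝ) (hα₂ : 0 ≤ α₂) (hβ₂ : 0 ≤ β₂)
    (u : ℝ → EuclideanSpace ℝ (Fin d) → ℝ)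
    (hmeas : ∀ t ∈ Set.Icc (0:ℝ) 1, Measurable (u t))
    (hsupp : ∀ t ∈ Set.Icc (0:ℝ) 1, Function.support (u t) ⊆ cube d Gu)
    (hbdd : ∀ t ∈ Set.Icc (0:ℝ) 1, ∀ x, |u t x| ≤ umax)
    (hmono : ∀ t ∈ Set.Icc ωm ωp, ∀ δ ∈ Set.Ioc (0:ℝ) (1 - ωp),
      ∃ x₀ ∈ cube d Gu, ∀ x,
        α₁ * δ ^ α₂ * (Metric.ball x₀ (β₁ * δ ^ β₂)).indicator (fun _ => (1:ℝ)) x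
          ≤ u (t + δ) x - u t x)
    (G₁ G₂ : ℝ) (hG₁ : 0 < G₁) (hG₁₂ : G₁ < G₂)
    (D : Set (EuclideanSpace ℝ (Fin d)))
    (hDel1 : ∀ x : EuclideanSpace ℝ (Fin d),
      (D ∩ {y | ∀ i, y i - x i ∈ Set.Ioo (-(G₁/2)) (G₁/2)}).Subsingleton)
    (hDel2 : ∀ x : EuclideanSpace ℝ (Fin d),
      (D ∩ {y | ∀ i, y i - x i ∈ Set.Ioo (-(G₂/2)) (G₂/2)}).Nonempty)
    (ω : ↥D → ℝ) (hω : ∀ j, ω j ∈ Set.Icc ωm ωp)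
    (δ : ℝ) (hδ : δ ∈ Set.Ioc (0:ℝ) (1 - ωp))
    (hsmall : β₁ * δ ^ β₂ < (G₂ + Gu) / 2)
    (L : ℕ) (hL : 0 < L) :
    ∃ z : (Fin d → ℤ) → EuclideanSpace ℝ (Fin d),
      Equidistributed d (G₂ + Gu) (β₁ * δ ^ β₂) z ∧
      ∀ x ∈ cube d ((G₂ + Gu) * L),
        α₁ * δ ^ α₂ *
            (Wset d (β₁ * δ ^ β₂) ((G₂ + Gu) * L) z).indicator
              (fun _ => (1:ℝ)) x ≤
          (∑' j : D, u (ω j + δ) (x - (j : EuclideanSpace ℝ (Fin d)))) -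
            ∑' j : D, u (ω j) (x - (j : EuclideanSpace ℝ (Fin d))) := by
  have hc : 0 < α₁ * δ ^ α₂ := mul_pos hα₁ (Real.rpow_pos_of_pos hδ.1 _)
  have ht0 : ∀ j, ω j ∈ Set.Icc (0:ℝ) 1 := fun j =>
    ⟨h1.trans (hω j).1, (hω j).2.trans h3.le⟩
  have ht1 : ∀ j, ω j + δ ∈ Set.Icc (0:ℝ) 1 := fun j =>
    ⟨by linarith [(ht0 j).1, hδ.1], by linarith [(hω j).2, hδ.2]⟩
  choose x₀ hx₀ hle using fun j : D => hmono (ω j) (hω j) δ hδ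
  have hball : ∀ j, Metric.ball (x₀ j) (β₁ * δ ^ β₂) ⊆ cube d Gu := by
    intro j y hy
    have h := hle j y
    rw [Set.indicator_of_mem hy, mul_one] at h
    by_cases ha : u (ω j) y = 0
    · apply hsupp _ (ht1 j)
      rw [Function.mem_support]
      intro hb
      rw [ha, hb] at h
      linarith
    · exact hsupp _ (ht0 j) ha
  choose p hpD hp using fun k : Fin d → ℤ =>
    hDel2 (WithLp.toLp 2 (fun i => (G₂ + Gu) * (k i : ℝ)))
  have hmem : ∀ k y, y ∈ Metric.ball (p k + x₀ ⟨p k, hpD k⟩) (β₁ * δ ^ β₂) →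
      y - p k ∈ Metric.ball (x₀ ⟨p k, hpD k⟩) (β₁ * δ ^ β₂) := by
    intro k y hy
    rw [Metric.mem_ball, dist_eq_norm] at hy ⊢
    rwa [sub_sub]
  refine ⟨fun k => p k + x₀ ⟨p k, hpD k⟩, ?_, ?_⟩
  · intro k y hy i
    have hy2 := hball _ (hmem k y hy) i
    have hpk := hp k i
    simp only [PiLp.sub_apply, Set.mem_Ioo] at hy2 hpk ⊢
    constructor <;> linarith [hy2.1, hy2.2, hpk.1, hpk.2]
  · intro x hx
    have hfin := delone_finite d G₁ Gu hG₁ D hDel1 x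
    have s1 : Summable fun j : D => u (ω j + δ) (x - (j : EuclideanSpace ℝ (Fin d))) :=
      summable_of_finite_support (hfin.subset fun j hj => hsupp _ (ht1 j) hj)
    have s0 : Summable fun j : D => u (ω j) (x - (j : EuclideanSpace ℝ (Fin d))) :=
      summable_of_finite_support (hfin.subset fun j hj => hsupp _ (ht0 j) hj)
    rw [← s1.tsum_sub s0]
    have hnn : ∀ j : D, 0 ≤ u (ω j + δ) (x - (j : EuclideanSpace ℝ (Fin d)))
        - u (ω j) (x - (j : EuclideanSpace ℝ (Fin d))) := fun j =>
      le_trans (mul_nonneg hc.le (Set.indicator_nonneg (fun _ _ => zero_le_one) _)) (hle j _)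
    by_cases hW : x ∈ Wset d (β₁ * δ ^ β₂) ((G₂ + Gu) * L)
        (fun k => p k + x₀ ⟨p k, hpD k⟩)
    · rw [Set.indicator_of_mem hW, mul_one]
      obtain ⟨k, hk⟩ := Set.mem_iUnion.1 hW.1
      have h := hle ⟨p k, hpD k⟩ (x - p k)
      rw [Set.indicator_of_mem (hmem k x hk), mul_one] at h
      exact h.trans ((s1.sub s0).le_tsum ⟨p k, hpD k⟩ (fun j _ => hnn j))
    · rw [Set.indicator_of_notMem hW, mul_zero]
      exact tsum_nonneg hnn
end
end

section
/- Let d ≥ 1 and let K ⊂ ℝ^d be a nonempty bounded open convex set with 0 in the closure of K. For t > 0 set K_t = {t·x : x ∈ K}, and K₀ = ∅. Then there exists a constant c > 0, depending only on K, such that for every t ∈ [0,1) and every δ ∈ (0, 1 − t], there exists x₀ ∈ ℝ^d with B(x₀, c·δ) ⊂ K_{t+δ} \ K_t. -/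
noncomputable section
open Real Set Pointwise

/-- **Convex dilation lemma** (condition (B) implies (A), Appendix B): for a
nonempty bounded open convex `K ⊂ ℝ^d` with `0 ∈ closure K`, setting
`K_t = t • K` for `t > 0` and `K₀ = ∅`, there is `c > 0` such that for all
`t ∈ [0,1)` and `δ ∈ (0, 1-t]` the difference `K_{t+δ} \ K_t` contains a ball
of radius `c δ`. -/
theorem convex_dilation_ball (d : ℕ) (hd : 1 ≤ d)
    (K : Set (EuclideanSpace ℝ (Fin d)))
    (hKne : K.Nonempty) (hKopen : IsOpen K) (hKbdd : Bornology.IsBounded K)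
    (hKconv : Convex ℝ K)
    (hK0 : (0 : EuclideanSpace ℝ (Fin d)) ∈ closure K) :
    ∃ c > 0, ∀ t ∈ Set.Ico (0:ℝ) 1, ∀ δ ∈ Set.Ioc (0:ℝ) (1 - t),
      ∃ x₀ : EuclideanSpace ℝ (Fin d),
        Metric.ball x₀ (c * δ) ⊆
          ((t + δ) • K) \ (if t = 0 then (∅ : Set (EuclideanSpace ℝ (Fin d))) else t • K) := by
  haveI : Nonempty (Fin d) := ⟨⟨0, hd⟩⟩
  obtain ⟨p, hpK, hp0⟩ :=
    (dense_compl_singleton (0 : EuclideanSpace ℝ (Fin d))).inter_open_nonempty K hKopen hKne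
  have hp0' : p ≠ 0 := hp0
  have hfc : Continuous (fun x : EuclideanSpace ℝ (Fin d) => inner ℝ p x) := by fun_prop
  have hcomp : IsCompact (closure K) := hKbdd.isCompact_closure
  obtain ⟨y, hy, hmax⟩ := hcomp.exists_isMaxOn hKne.closure hfc.continuousOn
  have hU : IsOpen (K ∩ {x | 0 < inner ℝ p x}) :=
    hKopen.inter (isOpen_lt continuous_const hfc)
  obtain ⟨c, hc, hball⟩ := Metric.isOpen_iff.1 hU p ⟨hpK, real_inner_self_pos.2 hp0'⟩
  refine ⟨c, hc, ?_⟩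
  rintro t ⟨ht0, ht1⟩ δ ⟨hδ, hδ1⟩
  refine ⟨t • y + δ • p, ?_⟩
  intro z hz
  obtain ⟨v, rfl⟩ : ∃ v, z = t • y + δ • v :=
    ⟨δ⁻¹ • (z - t • y), by rw [smul_inv_smul₀ hδ.ne']; abel⟩
  have hv : v ∈ Metric.ball p c := by
    rw [Metric.mem_ball, dist_add_left, dist_smul₀, Real.norm_of_nonneg hδ.le, mul_comm] at hz
    exact lt_of_mul_lt_mul_right hz hδ.le
  obtain ⟨hvK, hvf⟩ := hball hv
  have hvf' : 0 < inner ℝ p v := hvf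
  have hs : 0 < t + δ := by linarith
  constructor
  · have h := hKconv.combo_closure_interior_mem_interior hy
      (hKopen.interior_eq.symm ▸ hvK) (a := t / (t + δ)) (b := δ / (t + δ))
      (by positivity) (by positivity) (by field_simp)
    refine ⟨_, interior_subset h, ?_⟩
    simp only [smul_add, smul_smul]
    rw [mul_div_cancel₀ _ hs.ne', mul_div_cancel₀ _ hs.ne']
  · split_ifs with h0
    · simp
    · rintro ⟨k, hk, hkz⟩
      have h1 : inner ℝ p k ≤ inner ℝ p y := hmax (subset_closure hk)
      have h2 := congrArg (fun x => inner ℝ p x) hkz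
      simp only [inner_add_right, inner_smul_right] at h2
      have h3 := mul_le_mul_of_nonneg_left h1 ht0
      have h4 := mul_pos hδ hvf'
      linarith
end
end

section
/- Let d ≥ 1, 0 < ω₊ < 1, and let r : [0,∞) → [0,∞) be bounded, non-increasing and compactly supported, and suppose there exists x̃ > 0 at which r is differentiable with r(x̃) > 0 and r'(x̃) < 0. Define u_t : ℝ^d → [0,∞) for t ∈ (0,1] by u_t(x) = r(|x|/t), and u₀ ≡ 0. Then there exist constants α₁, β₁ > 0 such that for every t ∈ [0, ω₊] and every δ ∈ (0, 1 − ω₊] there exists x₀ ∈ ℝ^d with u_{t+δ}(x) − u_t(x) ≥ α₁·δ·χ_{B(x₀, β₁·δ)}(x) for all x ∈ ℝ^d. -/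
noncomputable section
open Real Set

/-- **Radial single-site potentials satisfy the abstract breather condition**
(condition (C) implies (A), Appendix B): if `r` is bounded, non-increasing,
compactly supported on `[0,∞)` and differentiable at some `x̃ > 0` with
`r(x̃) > 0` and `r'(x̃) < 0`, then the dilations `u_t(x) = r(|x|/t)` (with
`u₀ ≡ 0`) satisfy `u_{t+δ} - u_t ≥ α₁ δ χ_{B(x₀, β₁δ)}` for suitable
`α₁, β₁ > 0`. -/
theorem radial_breather_condition (d : ℕ) (hd : 1 ≤ d)
    (ωp : ℝ) (h1 : 0 < ωp) (h2 : ωp < 1)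
    (r : ℝ → ℝ)
    (hr_nonneg : ∀ x, 0 ≤ x → 0 ≤ r x)
    (hr_bdd : ∃ C, ∀ x, 0 ≤ x → r x ≤ C)
    (hr_mono : ∀ x y, 0 ≤ x → x ≤ y → r y ≤ r x)
    (hr_supp : ∃ R, ∀ x, R ≤ x → r x = 0)
    (xt m : ℝ) (hxt : 0 < xt) (hderiv : HasDerivAt r m xt) (hm : m < 0)
    (hval : 0 < r xt) :
    ∃ α₁ > (0:ℝ), ∃ β₁ > (0:ℝ),
      ∀ t ∈ Set.Icc (0:ℝ) ωp, ∀ δ ∈ Set.Ioc (0:ℝ) (1 - ωp),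
        ∃ x₀ : EuclideanSpace ℝ (Fin d), ∀ x : EuclideanSpace ℝ (Fin d),
          α₁ * δ * (Metric.ball x₀ (β₁ * δ)).indicator (fun _ => (1:ℝ)) x ≤
            (if t + δ = 0 then 0 else r (‖x‖ / (t + δ))) -
              (if t = 0 then 0 else r (‖x‖ / t)) := by
  have key : ∃ η > (0:ℝ), ∀ k, 0 < k → k < η → r xt + (-m/2) * k ≤ r (xt - k) := by
    have h := hasDerivAt_iff_tendsto_slope.1 hderiv
    have h3 := h.eventually (gt_mem_nhds (show m < m/2 by linarith))
    rw [eventually_nhdsWithin_iff, Metric.eventually_nhds_iff] at h3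
    obtain ⟨η, hη, H⟩ := h3
    refine ⟨η, hη, fun k hk hkη => ?_⟩
    have h4 := H (y := xt - k) (by rw [Real.dist_eq]; simpa [abs_of_pos hk] using hkη)
      (by simp [hk.ne'])
    rw [slope_def_field] at h4
    have h5 : (r (xt - k) - r xt) / (xt - k - xt) = -((r (xt - k) - r xt) / k) := by
      rw [show xt - k - xt = -k by ring, div_neg]
    rw [h5] at h4
    have h6 : -m/2 < (r (xt - k) - r xt) / k := by linarith
    rw [lt_div_iff₀ hk] at h6
    linarith
  obtain ⟨η, hη, key⟩ := key
  obtain ⟨q, hq0, hq1, hq2⟩ : ∃ q : ℝ, 0 < q ∧ q ≤ xt/4 ∧ q < η :=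
    ⟨min (xt/4) (η/2), by positivity, min_le_left _ _,
      lt_of_le_of_lt (min_le_right _ _) (by linarith)⟩
  refine ⟨(-m/2) * q, mul_pos (by linarith) hq0, xt/4, by linarith, ?_⟩
  rintro t ⟨ht0, ht1⟩ δ ⟨hδ0, hδ1⟩
  have hs0 : 0 < t + δ := by linarith
  have hs1 : t + δ ≤ 1 := by linarith
  refine ⟨EuclideanSpace.single ⟨0, hd⟩ (xt * (t + δ/2)), fun x => ?_⟩
  rw [if_neg hs0.ne']
  have hx0 := norm_nonneg x
  by_cases hx : x ∈ Metric.ball (EuclideanSpace.single (⟨0, hd⟩ : Fin d) (xt * (t + δ/2))) (xt/4 * δ)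
  · rw [Set.indicator_of_mem hx, mul_one]
    rw [Metric.mem_ball, dist_eq_norm] at hx
    have hn := lt_of_le_of_lt (abs_norm_sub_norm_le _ _) hx
    have hpos : 0 ≤ xt * (t + δ/2) := by positivity
    rw [EuclideanSpace.norm_single, Real.norm_eq_abs, abs_of_nonneg hpos, abs_lt] at hn
    obtain ⟨hn1, hn2⟩ := hn
    have hk : 0 < q * δ := by positivity
    have hA := key (q * δ) hk (by nlinarith)
    have hle : ‖x‖ / (t + δ) ≤ xt - q * δ := by
      rw [div_le_iff₀ hs0]
      have e1 : q * δ * (t + δ) ≤ q * δ * 1 := mul_le_mul_of_nonneg_left hs1 hk.le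
      have e2 : q * δ ≤ xt/4 * δ := mul_le_mul_of_nonneg_right hq1 hδ0.le
      nlinarith
    have hB := hr_mono _ _ (div_nonneg hx0 hs0.le) hle
    have hC : (if t = 0 then 0 else r (‖x‖ / t)) ≤ r xt := by
      split_ifs with h0
      · exact hval.le
      · have ht : 0 < t := lt_of_le_of_ne ht0 (Ne.symm h0)
        apply hr_mono _ _ hxt.le
        rw [le_div_iff₀ ht]
        nlinarith [mul_pos hxt hδ0]
    nlinarith
  · rw [Set.indicator_of_notMem hx, mul_zero, sub_nonneg]
    split_ifs with h0
    · exact hr_nonneg _ (div_nonneg hx0 hs0.le)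
    · have ht : 0 < t := lt_of_le_of_ne ht0 (Ne.symm h0)
      exact hr_mono _ _ (div_nonneg hx0 hs0.le)
        (div_le_div_of_nonneg_left hx0 ht (by linarith))
end
end

section
/- Let d ≥ 1 and δ ∈ (0,1/2). Then for every x ∈ S₂ and every y ∈ ℝ^{d+1} with y_{d+1} ≥ 0 and y ∉ S₃, one has |x − y| ≥ δ²/16; that is, the Euclidean distance between S₂ and {y ∈ ℝ^{d+1} : y_{d+1} ≥ 0} \ S₃ is at least δ²/16. -/
noncomputable section
open Real Set

/-- The set `S_c = {x ∈ ℝ^{d+1} : ψ(x) > c, x_{d+1} ∈ [0,1]}`. -/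
def Sset (d : ℕ) (c : ℝ) : Set (EuclideanSpace ℝ (Fin (d+1))) :=
  {x | c < psiW d x ∧ x (Fin.last d) ∈ Set.Icc (0:ℝ) 1}

/-- **Distance between the level sets `S₂` and `S₃`** (Appendix A.1.3): for
`δ ∈ (0,1/2)`, with `ψ₂ = -δ²/8` and `ψ₃ = -δ²/4`, the distance between `S₂`
and the complement of `S₃` in the upper half-space is at least `δ²/16`. -/
theorem S2_S3_distance (d : ℕ) (hd : 1 ≤ d) (δ : ℝ)
    (hδ : δ ∈ Set.Ioo (0:ℝ) (1/2))
    (x : EuclideanSpace ℝ (Fin (d+1))) (hx : x ∈ Sset d (-(δ^2/8)))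
    (y : EuclideanSpace ℝ (Fin (d+1))) (hy1 : 0 ≤ y (Fin.last d))
    (hy2 : y ∉ Sset d (-(δ^2/4))) :
    δ^2 / 16 ≤ dist x y := by
  obtain ⟨hδ0, hδ1⟩ := hδ
  obtain ⟨hx1, hx2, hx3⟩ := hx
  by_contra hlt
  push Not at hlt
  have hD0 : 0 ≤ dist x y := dist_nonneg
  have hsq : dist x y ^ 2 = (∑ i : Fin d, (y (Fin.castSucc i) - x (Fin.castSucc i))^2)
      + (y (Fin.last d) - x (Fin.last d))^2 := by
    rw [EuclideanSpace.dist_eq, Real.sq_sqrt (by positivity), Fin.sum_univ_castSucc]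
    simp only [Real.dist_eq, sq_abs]
    congr 1
    · exact Finset.sum_congr rfl fun i _ => by ring
    · ring
  have hcs := Finset.sum_mul_sq_le_sq_mul_sq Finset.univ
    (fun i : Fin d => x (Fin.castSucc i))
    (fun i : Fin d => y (Fin.castSucc i) - x (Fin.castSucc i))
  have hQ : ∑ i : Fin d, (y (Fin.castSucc i))^2 = ∑ i : Fin d, (x (Fin.castSucc i))^2
      + 2 * ∑ i : Fin d, x (Fin.castSucc i) * (y (Fin.castSucc i) - x (Fin.castSucc i))
      + ∑ i : Fin d, (y (Fin.castSucc i) - x (Fin.castSucc i))^2 := by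
    rw [Finset.mul_sum, ← Finset.sum_add_distrib, ← Finset.sum_add_distrib]
    exact Finset.sum_congr rfl fun i _ => by ring
  have hP0 : 0 ≤ ∑ i : Fin d, (x (Fin.castSucc i))^2 := by positivity
  have hE0 : 0 ≤ ∑ i : Fin d, (y (Fin.castSucc i) - x (Fin.castSucc i))^2 := by positivity
  simp only [Sset, psiW, Set.mem_setOf_eq, Set.mem_Icc] at hx1 hy2
  simp only at hcs
  rw [hQ] at hy2
  generalize (∑ i : Fin d, (x (Fin.castSucc i))^2) = P at *
  generalize (∑ i : Fin d, (y (Fin.castSucc i) - x (Fin.castSucc i))^2) = E at *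
  generalize (∑ i : Fin d, x (Fin.castSucc i) * (y (Fin.castSucc i) - x (Fin.castSucc i))) = C at *
  generalize x (Fin.last d) = s at *
  generalize y (Fin.last d) = t at *
  generalize dist x y = D at *
  have hd2 : δ^2 < 1/4 := by nlinarith
  have hss : s^2 ≤ s := by nlinarith
  have hs : s < 1/16 := by nlinarith
  have hP : P ≤ 1 := by nlinarith
  have hED : E ≤ D^2 := by nlinarith [sq_nonneg (t - s)]
  have hts : |t - s| ≤ D := abs_le_of_sq_le_sq (by linarith) hD0
  have hC : |C| ≤ D := by
    refine abs_le_of_sq_le_sq ?_ hD0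
    nlinarith
  have h1 := abs_le.mp hts
  have h2 := abs_le.mp hC
  have hDD : D^2 ≤ D := by nlinarith
  apply hy2
  refine ⟨?_, hy1, by linarith⟩
  have h3 : (t - s) * (1 - (s + t)/2) ≤ D := by
    have ha : 0 ≤ 1 - (s + t)/2 := by linarith
    have hb : 1 - (s + t)/2 ≤ 1 := by linarith
    nlinarith
  nlinarith
end
end
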